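/- arXiv:2406.18752 — 11 statements merged into one kernel-verified Lean document; each statement's English description precedes it below -/
import Mathlib

section
/- Let ω > 0 and set m = min(1, ω). Suppose x ∈ [0, m] and c > 0 satisfy: (i) m ≤ c·x, and (ii) for every U > 1 and every ε ∈ (0,1), (1−ε)·U ≤ c·(x + (1−x)·U). Then c ≥ 1 + m. (Interpretation: (i) is c-competitiveness on the instance consisting of the single item of unit value 1 and weight ω, where the offline optimum is m and the online algorithm accepts amount x; (ii) is c-competitiveness on the instance that additionally contains a final item of unit value U and weight 1−ε, where the offline optimum is at least (1−ε)U and the online profit is at most x + (1−x)U. Hence no online algorithm for fractional knapsack, even given the exact critical value as a prediction, has competitive ratio better than 1 + min{1, ω̂}.) -/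
/-!
With the final item of value `U` and weight `1 - ε`, the online profit is at most `x + (1 - x) * U`.
Letting `U → ∞` and then `ε → 0`, competitiveness forces `1 ≤ c * (1 - x)` on the capacity `1 - x`
left after the first item. The first item alone forces `m ≤ c * x`, and the two demands add up.
-/

open Filter

section OrderedField

variable {K : Type*} [Field K] [LinearOrder K] [IsStrictOrderedRing K]

theorem le_of_eventually_mul_le_add_mul {a b d : K}
    (h : ∀ᶠ U in atTop, a * U ≤ b + d * U) : a ≤ d := by
  by_contra! hda
  have hgt : ∀ᶠ U in atTop, b < (a - d) * U :=
    (tendsto_id.const_mul_atTop (sub_pos.2 hda)).eventually_gt_atTop b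
  obtain ⟨U, hle, hlt⟩ := (h.and hgt).exists
  linarith

theorem one_le_mul_one_sub_of_forall_one_sub_mul_le {x c : K}
    (h : ∀ U ε : K, 1 < U → 0 < ε → ε < 1 → (1 - ε) * U ≤ c * (x + (1 - x) * U)) :
    1 ≤ c * (1 - x) := by
  refine (isLUB_le_iff (isLUB_Ioo zero_lt_one)).2 fun r ⟨hr0, hr1⟩ ↦ ?_
  refine le_of_eventually_mul_le_add_mul (b := c * x) ?_
  filter_upwards [eventually_gt_atTop 1] with U hU
  calc
    r * U = (1 - (1 - r)) * U := by ring
    _ ≤ c * (x + (1 - x) * U) := h U (1 - r) hU (sub_pos.2 hr1) (sub_lt_self 1 hr0)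
    _ = c * x + c * (1 - x) * U := by ring

theorem stmt0_general {x c m : K} (h1 : m ≤ c * x)
    (h2 : ∀ U ε : K, 1 < U → 0 < ε → ε < 1 → (1 - ε) * U ≤ c * (x + (1 - x) * U)) :
    1 + m ≤ c :=
  calc
    1 + m ≤ c * (1 - x) + c * x :=
      add_le_add (one_le_mul_one_sub_of_forall_one_sub_mul_le h2) h1
    _ = c := by ring

end OrderedField

/-- Lower bound for online fractional knapsack with a trusted point prediction
of the critical value: no algorithm can beat `1 + min 1 ω`. -/
theorem stmt0 (ω x c : ℝ) (hω : 0 < ω) (m : ℝ) (hm : m = min 1 ω)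
    (hx0 : 0 ≤ x) (hxm : x ≤ m) (hc : 0 < c)
    (h1 : m ≤ c * x)
    (h2 : ∀ U ε : ℝ, 1 < U → 0 < ε → ε < 1 →
      (1 - ε) * U ≤ c * (x + (1 - x) * U)) :
    1 + m ≤ c :=
  stmt0_general h1 h2
end

section
/- In the PP-a setup, for every i = 0, 1, …, n the cumulative accepted amount satisfies s_i = (ω̂_i + ω̃_i)/(1 + ω̂_i). In particular, if the total weight of high items satisfies ω̃_n ≤ 1, then s_n ≤ 1, i.e., the online solution of PP-a is feasible for the fractional knapsack of capacity 1. -/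
open Finset

/-!
The argument follows the potential `(1 - s i) * (1 + ω̂ i)`. It starts at `1`, a high item of weight
`w` lowers it by exactly `w`, and a critical item leaves it unchanged, because `x i` is chosen so
that `1 - s` shrinks by the factor by which `1 + ω̂` grows. Hence it always equals `1 - ω̃ i`, which
is the closed form for `s i`; and `ω̃ n ≤ 1` makes it nonnegative, so that `s n ≤ 1`.
-/

/-- A run of PP-a on `n` items. Items are numbered from `0`: `w i`, `high i` and `x i` are the
weight, the type and the accepted amount of the item with number `i`, whereas `ωhat i` and `s i` are
the truncated critical weight and the total accepted amount after the first `i` items. The unit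
values enter the algorithm only through `high`, so they are not recorded. -/
structure IsPPaRun {K : Type*} [Field K] [LinearOrder K] (n : ℕ) (w : ℕ → K) (high : ℕ → Bool)
    (ωhat s x : ℕ → K) : Prop where
  ωhat_zero : ωhat 0 = 0
  s_zero : s 0 = 0
  high_step : ∀ i < n, high i = true → ωhat (i + 1) = ωhat i ∧ x i = w i / (1 + ωhat i)
  critical_step : ∀ i < n, high i = false →
    ωhat (i + 1) = ωhat i + min (w i) (1 - ωhat i) ∧
    x i = (1 - s i) * min (w i) (1 - ωhat i) / (1 + ωhat (i + 1))
  s_succ : ∀ i < n, s (i + 1) = s i + x i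

/-- The total weight `ω̃ i` of the high items among the first `i` items. -/
def highWeight {M : Type*} [AddCommMonoid M] (w : ℕ → M) (high : ℕ → Bool) (i : ℕ) : M :=
  ∑ j ∈ (range i).filter (fun j => high j = true), w j

section highWeight

variable {M : Type*} [AddCommMonoid M] {w : ℕ → M} {high : ℕ → Bool} {i : ℕ}

theorem highWeight_zero : highWeight w high 0 = 0 := by
  simp [highWeight]

theorem highWeight_succ_of_high (hi : high i = true) :
    highWeight w high (i + 1) = highWeight w high i + w i := by
  simp [highWeight, sum_filter, sum_range_succ, hi]

theorem highWeight_succ_of_critical (hi : high i = false) :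
    highWeight w high (i + 1) = highWeight w high i := by
  simp [highWeight, sum_filter, sum_range_succ, hi]

end highWeight

namespace IsPPaRun

variable {K : Type*} [Field K] [LinearOrder K] {n i : ℕ} {w : ℕ → K}
  {high : ℕ → Bool} {ωhat s x : ℕ → K}

theorem potential_succ_of_high (run : IsPPaRun n w high ωhat s x) (hi : i < n)
    (hb : high i = true) (hne : 1 + ωhat i ≠ 0) :
    (1 - s (i + 1)) * (1 + ωhat (i + 1)) = (1 - s i) * (1 + ωhat i) - w i := by
  obtain ⟨ωhat_succ, x_eq⟩ := run.high_step i hi hb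
  rw [run.s_succ i hi, ωhat_succ, x_eq]
  field_simp
  ring

theorem potential_succ_of_critical (run : IsPPaRun n w high ωhat s x) (hi : i < n)
    (hb : high i = false) (hne : 1 + ωhat (i + 1) ≠ 0) :
    (1 - s (i + 1)) * (1 + ωhat (i + 1)) = (1 - s i) * (1 + ωhat i) := by
  obtain ⟨ωhat_succ, x_eq⟩ := run.critical_step i hi hb
  have x_mul : x i * (1 + ωhat (i + 1)) = (1 - s i) * (ωhat (i + 1) - ωhat i) := by
    rw [x_eq, div_mul_cancel₀ _ hne, ωhat_succ, add_sub_cancel_left]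
  rw [run.s_succ i hi]
  linear_combination -x_mul

variable [IsStrictOrderedRing K]

theorem ωhat_mem_Icc (run : IsPPaRun n w high ωhat s x)
    (hw : ∀ i < n, high i = false → 0 ≤ w i) (hi : i ≤ n) : ωhat i ∈ Set.Icc 0 1 := by
  induction i with
  | zero => simp [run.ωhat_zero]
  | succ i ih =>
    obtain ⟨ωhat_nonneg, ωhat_le_one⟩ := ih (Nat.le_of_succ_le hi)
    cases hb : high i with
    | true =>
      rw [(run.high_step i hi hb).1]
      exact ⟨ωhat_nonneg, ωhat_le_one⟩
    | false =>
      rw [(run.critical_step i hi hb).1]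
      have added_nonneg : 0 ≤ min (w i) (1 - ωhat i) :=
        le_min (hw i hi hb) (sub_nonneg.2 ωhat_le_one)
      have added_le : min (w i) (1 - ωhat i) ≤ 1 - ωhat i := min_le_right _ _
      exact ⟨add_nonneg ωhat_nonneg added_nonneg, by linarith⟩

theorem one_add_ωhat_pos (run : IsPPaRun n w high ωhat s x)
    (hw : ∀ i < n, high i = false → 0 ≤ w i) (hi : i ≤ n) : 0 < 1 + ωhat i :=
  add_pos_of_pos_of_nonneg one_pos (run.ωhat_mem_Icc hw hi).1

theorem potential_eq (run : IsPPaRun n w high ωhat s x)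
    (hw : ∀ i < n, high i = false → 0 ≤ w i) (hi : i ≤ n) :
    (1 - s i) * (1 + ωhat i) = 1 - highWeight w high i := by
  induction i with
  | zero => simp [run.s_zero, run.ωhat_zero, highWeight_zero]
  | succ i ih =>
    have hi' : i ≤ n := Nat.le_of_succ_le hi
    cases hb : high i with
    | true =>
      rw [run.potential_succ_of_high hi hb (run.one_add_ωhat_pos hw hi').ne', ih hi',
        highWeight_succ_of_high hb, sub_sub]
    | false =>
      rw [run.potential_succ_of_critical hi hb (run.one_add_ωhat_pos hw hi).ne', ih hi',
        highWeight_succ_of_critical hb]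

theorem s_eq (run : IsPPaRun n w high ωhat s x)
    (hw : ∀ i < n, high i = false → 0 ≤ w i) (hi : i ≤ n) :
    s i = (ωhat i + highWeight w high i) / (1 + ωhat i) := by
  rw [eq_div_iff (run.one_add_ωhat_pos hw hi).ne']
  linear_combination -run.potential_eq hw hi

theorem s_le_one (run : IsPPaRun n w high ωhat s x)
    (hw : ∀ i < n, high i = false → 0 ≤ w i) (hi : i ≤ n) (hhigh : highWeight w high i ≤ 1) :
    s i ≤ 1 := by
  have potential_nonneg : 0 ≤ (1 - s i) * (1 + ωhat i) := by
    rw [run.potential_eq hw hi]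
    exact sub_nonneg.2 hhigh
  exact sub_nonneg.1 (nonneg_of_mul_nonneg_left potential_nonneg (run.one_add_ωhat_pos hw hi))

end IsPPaRun

theorem stmt2_general {K : Type*} [Field K] [LinearOrder K] [IsStrictOrderedRing K] {n : ℕ}
    {w : ℕ → K} {high : ℕ → Bool} {ωhat s x : ℕ → K}
    (run : IsPPaRun n w high ωhat s x) (hw : ∀ i < n, high i = false → 0 ≤ w i) :
    (∀ i ≤ n, s i = (ωhat i + highWeight w high i) / (1 + ωhat i)) ∧
    (highWeight w high n ≤ 1 → s n ≤ 1) :=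
  ⟨fun _ hi => run.s_eq hw hi, run.s_le_one hw le_rfl⟩

/-- In the PP-a setup, the cumulative accepted amount satisfies
`s i = (ω̂ i + ω̃ i) / (1 + ω̂ i)` for every `i ≤ n`; in particular,
if the total weight of high items is at most 1, the PP-a solution is feasible. -/
theorem stmt2 (n : ℕ) (w : ℕ → ℝ) (high : ℕ → Bool) (vhat : ℝ) (hvhat : 0 < vhat)
    (hw : ∀ i < n, 0 ≤ w i)
    (ωhat s x ωtilde : ℕ → ℝ)
    (hω0 : ωhat 0 = 0) (hs0 : s 0 = 0)
    (hhigh : ∀ i < n, high i = true →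
      ωhat (i + 1) = ωhat i ∧ x i = w i / (1 + ωhat i))
    (hcrit : ∀ i < n, high i = false →
      ωhat (i + 1) = ωhat i + min (w i) (1 - ωhat i) ∧
      x i = (1 - s i) * min (w i) (1 - ωhat i) / (1 + ωhat (i + 1)))
    (hs : ∀ i < n, s (i + 1) = s i + x i)
    (hωt : ∀ i, ωtilde i = ∑ j ∈ (Finset.range i).filter (fun j => high j = true), w j) :
    (∀ i ≤ n, s i = (ωhat i + ωtilde i) / (1 + ωhat i)) ∧
    (ωtilde n ≤ 1 → s n ≤ 1) := by
  obtain rfl : ωtilde = highWeight w high := funext hωt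
  exact stmt2_general ⟨hω0, hs0, hhigh, hcrit, hs⟩ fun i hi _ => hw i hi
end

section
/- Let items i = 1,…,n have unit values v_i > 0 and weights w_i ≥ 0, let 0 < ℓ ≤ u and α > 0. Assume the critical value v̂ satisfies ℓ ≤ v̂ ≤ u, where W := Σ_{i : v_i > v̂} w_i < 1 ≤ W + Σ_{i : v_i = v̂} w_i, and OPT := Σ_{i : v_i > v̂} v_i w_i + v̂·(1 − W). Let x^A satisfy 0 ≤ x^A_i ≤ w_i for items with v_i ∈ [ℓ, u], x^A_i = 0 otherwise, Σ_i x^A_i ≤ 1, together with the α-guarantee: every allocation z with 0 ≤ z_i ≤ w_i supported on items with v_i ∈ [ℓ, u] and Σ_i z_i ≤ 1 satisfies Σ_i v_i z_i ≤ α·Σ_i v_i x^A_i. Then OPT ≤ α·Σ_{i : v_i ∈ [ℓ,u]} v_i x^A_i + Σ_{i : v_i > u} v_i w_i = (α+1)·( Σ_{i : v_i ∈ [ℓ,u]} v_i·(α/(α+1))·x^A_i + Σ_{i : v_i > u} v_i·w_i/(α+1) ); i.e., IPA is (α+1)-competitive. -/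
open Finset

/-!
The greedy allocation takes every item above the critical value and fills the remaining capacity
with a common fraction of the items at the critical value, so its profit is the offline optimum.
It takes nothing below `ℓ`; its part inside `[ℓ, u]` is an allocation the sub-algorithm competes
with, and its part above `u` consists of whole items.
-/

theorem sum_eq_sum_mem_window_add_sum_above {ι R M : Type*} [Fintype ι] [LinearOrder R]
    [AddCommMonoid M] {v : ι → R} {ℓ u : R} {f : ι → M} (hf : ∀ i, v i < ℓ → f i = 0) :
    ∑ i, f i = ∑ i with ℓ ≤ v i ∧ v i ≤ u, f i + ∑ i with u < v i, f i := by
  rw [sum_filter, sum_filter, ← sum_add_distrib]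
  refine sum_congr rfl fun i _ => ?_
  rcases lt_or_ge (v i) ℓ with hℓ | hℓ
  · simp [hf i hℓ]
  · rcases lt_or_ge u (v i) with hu | hu
    · simp [hu, hu.not_ge]
    · simp [hℓ, hu, hu.not_gt]

section FractionalKnapsack

variable {ι K : Type*} [Fintype ι] [Field K] [LinearOrder K]

/-- Feasible allocations of a fractional knapsack with item weights `w` and capacity `C`. -/
structure IsFeasibleAllocation (w : ι → K) (C : K) (y : ι → K) : Prop where
  nonneg_and_le : ∀ i, 0 ≤ y i ∧ y i ≤ w i
  sum_le : ∑ i, y i ≤ C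

/-- `c` is the critical unit value: the items of larger value leave capacity unused, and together
with the items of value exactly `c` they fill the knapsack. -/
structure IsCriticalValue (v w : ι → K) (C c : K) : Prop where
  sum_above_lt : ∑ i with c < v i, w i < C
  le_sum_above_add_sum_at : C ≤ ∑ i with c < v i, w i + ∑ i with v i = c, w i

/-- The fraction of each item of value `c` that the greedy allocation takes, spreading the capacity
left by the items above `c` proportionally to weight. -/
def criticalFraction (v w : ι → K) (C c : K) : K :=
  (C - ∑ i with c < v i, w i) / ∑ i with v i = c, w i

/-- The offline optimal allocation: all of the items above the critical value `c`, a common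
fraction of the items at `c`, and nothing below. -/
def greedyAllocation (v w : ι → K) (C c : K) (i : ι) : K :=
  if c < v i then w i else if v i = c then criticalFraction v w C c * w i else 0

variable {v w x y z : ι → K} {C c ℓ u α : K}

theorem greedyAllocation_of_lt {i : ι} (h : c < v i) : greedyAllocation v w C c i = w i :=
  if_pos h

theorem greedyAllocation_of_gt {i : ι} (h : v i < c) : greedyAllocation v w C c i = 0 := by
  rw [greedyAllocation, if_neg h.not_gt, if_neg h.ne]

theorem greedyAllocation_of_eq {i : ι} (h : v i = c) :
    greedyAllocation v w C c i = criticalFraction v w C c * w i := by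
  rw [greedyAllocation, if_neg h.not_gt, if_pos h]

theorem sum_mul_greedyAllocation (f : ι → K) :
    ∑ i, f i * greedyAllocation v w C c i =
      ∑ i with c < v i, f i * w i +
        criticalFraction v w C c * ∑ i with v i = c, f i * w i := by
  rw [sum_filter, sum_filter, mul_sum, ← sum_add_distrib]
  refine sum_congr rfl fun i _ => ?_
  rcases lt_trichotomy (v i) c with h | h | h
  · simp [greedyAllocation_of_gt h, h.not_gt, h.ne]
  · simp [greedyAllocation_of_eq h, h, mul_left_comm]
  · simp [greedyAllocation_of_lt h, h, h.ne']

variable [IsStrictOrderedRing K]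

namespace IsCriticalValue

theorem sum_at_pos (hc : IsCriticalValue v w C c) : 0 < ∑ i with v i = c, w i := by
  linarith [hc.sum_above_lt, hc.le_sum_above_add_sum_at]

theorem criticalFraction_mul_sum_at (hc : IsCriticalValue v w C c) :
    criticalFraction v w C c * ∑ i with v i = c, w i = C - ∑ i with c < v i, w i :=
  div_mul_cancel₀ _ hc.sum_at_pos.ne'

theorem criticalFraction_nonneg (hc : IsCriticalValue v w C c) : 0 ≤ criticalFraction v w C c :=
  div_nonneg (sub_nonneg.2 hc.sum_above_lt.le) hc.sum_at_pos.le

theorem criticalFraction_le_one (hc : IsCriticalValue v w C c) : criticalFraction v w C c ≤ 1 :=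
  (div_le_one hc.sum_at_pos).2 (sub_le_iff_le_add'.2 hc.le_sum_above_add_sum_at)

theorem sum_greedyAllocation (hc : IsCriticalValue v w C c) :
    ∑ i, greedyAllocation v w C c i = C := by
  simpa [hc.criticalFraction_mul_sum_at] using
    sum_mul_greedyAllocation (v := v) (w := w) (C := C) (c := c) 1

theorem profit_greedyAllocation (hc : IsCriticalValue v w C c) :
    ∑ i, v i * greedyAllocation v w C c i =
      ∑ i with c < v i, v i * w i + c * (C - ∑ i with c < v i, w i) := by
  have value_at : ∑ i with v i = c, v i * w i = c * ∑ i with v i = c, w i := by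
    rw [mul_sum]
    exact sum_congr rfl fun i hi => by rw [(mem_filter.1 hi).2]
  rw [sum_mul_greedyAllocation, value_at, mul_left_comm, hc.criticalFraction_mul_sum_at]

theorem isFeasibleAllocation_greedyAllocation (hc : IsCriticalValue v w C c)
    (hw : ∀ i, 0 ≤ w i) : IsFeasibleAllocation w C (greedyAllocation v w C c) where
  nonneg_and_le i := by
    rcases lt_trichotomy (v i) c with h | h | h
    · rw [greedyAllocation_of_gt h]
      exact ⟨le_rfl, hw i⟩
    · rw [greedyAllocation_of_eq h]
      exact ⟨mul_nonneg hc.criticalFraction_nonneg (hw i),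
        mul_le_of_le_one_left (hw i) hc.criticalFraction_le_one⟩
    · rw [greedyAllocation_of_lt h]
      exact ⟨hw i, le_rfl⟩
  sum_le := hc.sum_greedyAllocation.le

end IsCriticalValue

namespace IsFeasibleAllocation

theorem of_le (hy : IsFeasibleAllocation w C y) (hz : ∀ i, 0 ≤ z i) (hzy : ∀ i, z i ≤ y i) :
    IsFeasibleAllocation w C z where
  nonneg_and_le i := ⟨hz i, (hzy i).trans (hy.nonneg_and_le i).2⟩
  sum_le := (sum_le_sum fun i _ => hzy i).trans hy.sum_le

theorem profit_window_le (hy : IsFeasibleAllocation w C y)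
    (hguar : ∀ z, IsFeasibleAllocation w C z → (∀ i, v i < ℓ ∨ u < v i → z i = 0) →
      ∑ i, v i * z i ≤ α * ∑ i, v i * x i) :
    ∑ i with ℓ ≤ v i ∧ v i ≤ u, v i * y i ≤ α * ∑ i, v i * x i := by
  let z i := if ℓ ≤ v i ∧ v i ≤ u then y i else 0
  have z_feasible : IsFeasibleAllocation w C z := by
    refine hy.of_le (fun i => ?_) fun i => ?_ <;> dsimp only [z] <;> split_ifs
    exacts [(hy.nonneg_and_le i).1, le_rfl, le_rfl, (hy.nonneg_and_le i).1]
  have z_support : ∀ i, v i < ℓ ∨ u < v i → z i = 0 := fun i hi =>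
    if_neg fun h => hi.elim h.1.not_gt h.2.not_gt
  calc ∑ i with ℓ ≤ v i ∧ v i ≤ u, v i * y i = ∑ i, v i * z i := by
        simp only [sum_filter, z, mul_ite, mul_zero]
    _ ≤ α * ∑ i, v i * x i := hguar z z_feasible z_support

end IsFeasibleAllocation

theorem optimum_le_of_window_guarantee (hw : ∀ i, 0 ≤ w i) (hℓc : ℓ ≤ c) (hcu : c ≤ u)
    (hc : IsCriticalValue v w C c)
    (hguar : ∀ z, IsFeasibleAllocation w C z → (∀ i, v i < ℓ ∨ u < v i → z i = 0) →
      ∑ i, v i * z i ≤ α * ∑ i, v i * x i) :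
    ∑ i with c < v i, v i * w i + c * (C - ∑ i with c < v i, w i) ≤
      α * ∑ i, v i * x i + ∑ i with u < v i, v i * w i := by
  let g := greedyAllocation v w C c
  have g_below : ∀ i, v i < ℓ → v i * g i = 0 := fun i hi =>
    mul_eq_zero_of_right _ (greedyAllocation_of_gt (hi.trans_le hℓc))
  have g_above : ∑ i with u < v i, v i * g i = ∑ i with u < v i, v i * w i :=
    sum_congr rfl fun i hi => by
      rw [show g i = w i from greedyAllocation_of_lt (hcu.trans_lt (mem_filter.1 hi).2)]
  rw [← hc.profit_greedyAllocation, sum_eq_sum_mem_window_add_sum_above g_below, g_above]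
  gcongr
  exact (hc.isFeasibleAllocation_greedyAllocation hw).profit_window_le hguar

end FractionalKnapsack

theorem mul_sum_add_sum_eq_add_one_mul {ι K : Type*} [Field K] {α : K} (hα : α + 1 ≠ 0)
    (s t : Finset ι) (v w x : ι → K) :
    α * ∑ i ∈ s, v i * x i + ∑ i ∈ t, v i * w i =
      (α + 1) * (∑ i ∈ s, v i * (α / (α + 1) * x i) + ∑ i ∈ t, v i * (w i / (α + 1))) := by
  rw [mul_add, mul_sum, mul_sum, mul_sum]
  congr 1 <;> refine sum_congr rfl fun i _ => ?_ <;> field_simp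

theorem stmt6_general {ι K : Type*} [Fintype ι] [Field K] [LinearOrder K] [IsStrictOrderedRing K]
    {v w x : ι → K} {C c ℓ u α : K} (hw : ∀ i, 0 ≤ w i) (hα : α + 1 ≠ 0)
    (hℓc : ℓ ≤ c) (hcu : c ≤ u) (hc : IsCriticalValue v w C c)
    (hx : ∀ i, v i < ℓ ∨ u < v i → x i = 0)
    (hguar : ∀ z, IsFeasibleAllocation w C z → (∀ i, v i < ℓ ∨ u < v i → z i = 0) →
      ∑ i, v i * z i ≤ α * ∑ i, v i * x i) :
    (∑ i with c < v i, v i * w i + c * (C - ∑ i with c < v i, w i) ≤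
      α * ∑ i with ℓ ≤ v i ∧ v i ≤ u, v i * x i + ∑ i with u < v i, v i * w i) ∧
    (α * ∑ i with ℓ ≤ v i ∧ v i ≤ u, v i * x i + ∑ i with u < v i, v i * w i =
      (α + 1) * (∑ i with ℓ ≤ v i ∧ v i ≤ u, v i * (α / (α + 1) * x i) +
        ∑ i with u < v i, v i * (w i / (α + 1)))) := by
  refine ⟨?_, mul_sum_add_sum_eq_add_one_mul hα _ _ v w x⟩
  have x_window : ∑ i with ℓ ≤ v i ∧ v i ≤ u, v i * x i = ∑ i, v i * x i := by
    refine sum_filter_of_ne fun i _ hne => ?_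
    contrapose! hne
    rw [hx i (by grind), mul_zero]
  rw [x_window]
  exact optimum_le_of_window_guarantee hw hℓc hcu hc hguar

/-- (α+1)-competitiveness of IPA: with an interval prediction `[ℓ, u]`
containing the critical value and an α-competitive sub-algorithm on items
with values in `[ℓ, u]`, the offline optimum is bounded by
`α · (value of xA) + (value of items above u)`, which equals `(α+1)` times
the IPA profit. -/
theorem stmt6 (n : ℕ) (v w xA : Fin n → ℝ) (ℓ u α vhat : ℝ)
    (hv : ∀ i, 0 < v i) (hw : ∀ i, 0 ≤ w i)
    (hℓ : 0 < ℓ) (hℓu : ℓ ≤ u) (hα : 0 < α)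
    (hℓv : ℓ ≤ vhat) (hvu : vhat ≤ u)
    (W : ℝ)
    (hWdef : W = ∑ i ∈ Finset.univ.filter (fun i => vhat < v i), w i)
    (hW1 : W < 1)
    (hW2 : 1 ≤ W + ∑ i ∈ Finset.univ.filter (fun i => v i = vhat), w i)
    (OPT : ℝ)
    (hOPT : OPT = (∑ i ∈ Finset.univ.filter (fun i => vhat < v i), v i * w i)
                    + vhat * (1 - W))
    (hxA1 : ∀ i, ℓ ≤ v i → v i ≤ u → 0 ≤ xA i ∧ xA i ≤ w i)
    (hxA2 : ∀ i, (v i < ℓ ∨ u < v i) → xA i = 0)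
    (hxA3 : ∑ i, xA i ≤ 1)
    (hguar : ∀ z : Fin n → ℝ, (∀ i, 0 ≤ z i ∧ z i ≤ w i) →
      (∀ i, (v i < ℓ ∨ u < v i) → z i = 0) → (∑ i, z i ≤ 1) →
      ∑ i, v i * z i ≤ α * ∑ i, v i * xA i) :
    (OPT ≤ α * (∑ i ∈ Finset.univ.filter (fun i => ℓ ≤ v i ∧ v i ≤ u), v i * xA i)
            + ∑ i ∈ Finset.univ.filter (fun i => u < v i), v i * w i) ∧
    (α * (∑ i ∈ Finset.univ.filter (fun i => ℓ ≤ v i ∧ v i ≤ u), v i * xA i)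
        + ∑ i ∈ Finset.univ.filter (fun i => u < v i), v i * w i
      = (α + 1) *
        ((∑ i ∈ Finset.univ.filter (fun i => ℓ ≤ v i ∧ v i ≤ u),
            v i * ((α / (α + 1)) * xA i))
          + ∑ i ∈ Finset.univ.filter (fun i => u < v i), v i * (w i / (α + 1)))) := by
  subst hWdef hOPT
  exact stmt6_general hw (by positivity) hℓv hvu ⟨hW1, hW2⟩ hxA2
    fun z hz hsupp => hguar z hz.nonneg_and_le hsupp hz.sum_le
end

section
/- Let 0 < L ≤ U and γ > 0, and let g : ℝ → ℝ be nondecreasing on [L, U]. If for every x ∈ [L, U], g(x) ≥ 1/γ + (1/x)·∫_L^x g(t) dt, then for every x ∈ [L, U], g(x) ≥ (1/γ)·(1 + ln(x/L)). -/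
/-!
Let `G x = ∫ t in L..x, g t`. Wherever `G' = g`, hence almost everywhere, the quotient `G x / x`
has derivative `(g x - G x / x) / x`, which the hypothesis bounds below by `c / x` with `c = 1 / γ`.
The quotient is absolutely continuous and vanishes at `L`, so integrating gives
`c * log (x / L) ≤ G x / x`, and one more use of the hypothesis concludes.
-/

open MeasureTheory Set

section

variable {a b : ℝ} {g : ℝ → ℝ}

theorem integral_le_sub_of_ae_le_deriv {f φ : ℝ → ℝ} (hab : a ≤ b)
    (hf : AbsolutelyContinuousOnInterval f a b) (hφ : IntervalIntegrable φ volume a b)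
    (hle : ∀ᵐ x, x ∈ Icc a b → φ x ≤ deriv f x) :
    ∫ x in a..b, φ x ≤ f b - f a := by
  rw [← hf.integral_deriv_eq_sub]
  exact intervalIntegral.integral_mono_ae_restrict hab hφ hf.intervalIntegrable_deriv
    ((ae_restrict_iff' measurableSet_Icc).2 hle)

theorem absolutelyContinuousOnInterval_inv (h0 : (0 : ℝ) ∉ uIcc a b) :
    AbsolutelyContinuousOnInterval (fun x : ℝ ↦ x⁻¹) a b :=
  ContDiffOn.absolutelyContinuousOnInterval
    (contDiffOn_id.inv fun _ hx ↦ ne_of_mem_of_not_mem hx h0)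

theorem absolutelyContinuousOnInterval_inv_mul_integral (h0 : (0 : ℝ) ∉ uIcc a b)
    (hg : IntervalIntegrable g volume a b) :
    AbsolutelyContinuousOnInterval (fun x ↦ x⁻¹ * ∫ t in a..x, g t) a b :=
  (absolutelyContinuousOnInterval_inv h0).mul
    (hg.absolutelyContinuousOnInterval_intervalIntegral left_mem_uIcc)

theorem ae_deriv_inv_mul_integral (h0 : (0 : ℝ) ∉ uIcc a b)
    (hg : IntervalIntegrable g volume a b) :
    ∀ᵐ x, x ∈ uIcc a b →
      deriv (fun y ↦ y⁻¹ * ∫ t in a..y, g t) x = x⁻¹ * (g x - x⁻¹ * ∫ t in a..x, g t) := by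
  filter_upwards [hg.ae_hasDerivAt_integral] with x hderiv hx
  have hx0 : x ≠ 0 := ne_of_mem_of_not_mem hx h0
  rw [((hasDerivAt_inv hx0).fun_mul (hderiv hx a left_mem_uIcc)).deriv]
  ring

theorem integral_inv_mul_le_inv_mul_integral {φ : ℝ → ℝ} (ha : 0 < a) (hab : a ≤ b)
    (hφ : IntervalIntegrable φ volume a b) (hg : IntervalIntegrable g volume a b)
    (hle : ∀ x ∈ Icc a b, φ x + x⁻¹ * ∫ t in a..x, g t ≤ g x) :
    ∫ x in a..b, x⁻¹ * φ x ≤ b⁻¹ * ∫ t in a..b, g t := by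
  have h0 : (0 : ℝ) ∉ uIcc a b := notMem_uIcc_of_lt ha (ha.trans_le hab)
  have hinv : ContinuousOn (fun x : ℝ ↦ x⁻¹) (uIcc a b) :=
    (absolutelyContinuousOnInterval_inv h0).continuousOn
  have hderiv : ∀ᵐ x, x ∈ Icc a b →
      x⁻¹ * φ x ≤ deriv (fun y ↦ y⁻¹ * ∫ t in a..y, g t) x := by
    filter_upwards [ae_deriv_inv_mul_integral h0 hg] with x hx hxab
    have hx0 : 0 < x := ha.trans_le hxab.1
    rw [hx (Icc_subset_uIcc hxab)]
    gcongr
    exact le_sub_iff_add_le.2 (hle x hxab)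
  simpa using integral_le_sub_of_ae_le_deriv hab
    (absolutelyContinuousOnInterval_inv_mul_integral h0 hg) (hφ.continuousOn_mul hinv) hderiv

end

theorem stmt11_general {L U c : ℝ} {g : ℝ → ℝ} (hL : 0 < L)
    (hg : IntervalIntegrable g volume L U)
    (h : ∀ x ∈ Icc L U, c + (1 / x) * (∫ t in L..x, g t) ≤ g x) :
    ∀ x ∈ Icc L U, c * (1 + Real.log (x / L)) ≤ g x := by
  intro x hx
  have hsub : Icc L x ⊆ Icc L U := Icc_subset_Icc_right hx.2
  have hgx : IntervalIntegrable g volume L x :=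
    hg.mono_set (uIcc_subset_uIcc_left (Icc_subset_uIcc hx))
  have hlog : ∫ t in L..x, t⁻¹ * c ≤ x⁻¹ * ∫ t in L..x, g t :=
    integral_inv_mul_le_inv_mul_integral hL hx.1 intervalIntegrable_const hgx
      fun t ht ↦ by simpa only [one_div] using h t (hsub ht)
  calc c * (1 + Real.log (x / L)) = c + ∫ t in L..x, t⁻¹ * c := by
        rw [intervalIntegral.integral_mul_const, integral_inv_of_pos hL (hL.trans_le hx.1)]
        ring
    _ ≤ c + (1 / x) * ∫ t in L..x, g t := by simpa only [one_div, add_le_add_iff_left] using hlog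
    _ ≤ g x := h x hx

/-- Grönwall-type inequality underlying the robustness constraint for online
knapsack: if `g` is nondecreasing on `[L, U]` and satisfies
`g x ≥ 1/γ + (1/x) ∫_L^x g`, then `g x ≥ (1/γ)(1 + ln(x/L))` on `[L, U]`. -/
theorem stmt11 (L U γ : ℝ) (g : ℝ → ℝ)
    (hL : 0 < L) (hLU : L ≤ U) (hγ : 0 < γ)
    (hmono : MonotoneOn g (Set.Icc L U))
    (h : ∀ x ∈ Set.Icc L U, 1 / γ + (1 / x) * (∫ t in L..x, g t) ≤ g x) :
    ∀ x ∈ Set.Icc L U, (1 / γ) * (1 + Real.log (x / L)) ≤ g x :=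
  stmt11_general hL (MonotoneOn.intervalIntegrable (by rwa [uIcc_of_le hLU])) h
end

section
/- Let 0 < L < U, let γ ≥ 1 + ln(U/L), let η > 0, and let g : ℝ → ℝ be nondecreasing on [L, U] with 0 ≤ g(x) ≤ 1 for x ∈ [L, U] and g(U) = 1. Suppose that for every x ∈ [L, U], g(x) ≥ (1/γ)·(1 + ln(x/L)) and g(x) ≥ 1/η, and that U·g(U) − ∫_L^U g(t) dt ≥ U/η. Then η ≥ max{ 2 − L/U, 1/(1 − ln(U/L)/γ) }. (Interpretation: g is the acceptance function of any deterministic γ-robust, η-consistent learning-augmented online knapsack algorithm given an untrusted prediction of the critical value, evaluated on continuously non-decreasing instances; hence any γ-robust algorithm with γ ∈ [ln(U/L)+1, ∞) is at least max{2 − L/U, 1/(1 − ln(U/L)/γ)}-consistent.) -/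
/-!
Since the knapsack has capacity one, consistency when items of value `U` are appended leaves at most
`U - U / η` for `∫ t in L..U, g t`. Consistency on `I_x` bounds that integral below by
`(U - L) / η`, and robustness bounds it below by
`γ⁻¹ * ∫ t in L..U, (1 + log (t / L)) = U * log (U / L) / γ`. Comparing either lower bound with the
upper bound and solving for `η` yields one of the two terms of the maximum.
-/

open MeasureTheory Real Set

section IntegralLowerBounds

theorem intervalIntegrable_log_div (a b c : ℝ) :
    IntervalIntegrable (fun x ↦ log (x / c)) volume a b := by
  rcases eq_or_ne c 0 with rfl | hc
  · simp
  · simpa [hc, div_eq_mul_inv] using IntervalIntegrable.comp_mul_right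
      (intervalIntegral.intervalIntegrable_log' (a := a / c) (b := b / c)) (c := c⁻¹)

theorem integral_one_add_log_div {a : ℝ} (ha : a ≠ 0) (b : ℝ) :
    ∫ x in a..b, (1 + log (x / a)) = b * log (b / a) := by
  rw [intervalIntegral.integral_add intervalIntegrable_const (intervalIntegrable_log_div a b a),
    intervalIntegral.integral_comp_div _ ha, integral_log, intervalIntegral.integral_const]
  simp only [div_self ha, log_one, smul_eq_mul]
  field_simp
  ring

variable {a b : ℝ} {g : ℝ → ℝ}

theorem sub_mul_le_integral_of_forall_le {c : ℝ} (hab : a ≤ b)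
    (hg : IntervalIntegrable g volume a b) (hc : ∀ x ∈ Icc a b, c ≤ g x) :
    (b - a) * c ≤ ∫ x in a..b, g x := by
  simpa using intervalIntegral.integral_mono_on hab intervalIntegrable_const hg hc

theorem mul_log_div_le_integral_of_one_add_log_div_le (ha : a ≠ 0) (hab : a ≤ b)
    (hg : IntervalIntegrable g volume a b) (hlog : ∀ x ∈ Icc a b, 1 + log (x / a) ≤ g x) :
    b * log (b / a) ≤ ∫ x in a..b, g x := by
  rw [← integral_one_add_log_div ha]
  exact intervalIntegral.integral_mono_on hab
    (intervalIntegrable_const.add (intervalIntegrable_log_div a b a)) hg hlog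

end IntegralLowerBounds

section ConsistencyBounds

variable {U η I : ℝ}

theorem two_sub_div_le_of_div_le_sub {L : ℝ} (hU : 0 < U) (hη : 0 < η)
    (hI : (U - L) * (1 / η) ≤ I) (hIU : U / η ≤ U - I) : 2 - L / U ≤ η := by
  have sum_le : (U + (U - L)) / η ≤ U := by
    calc (U + (U - L)) / η = U / η + (U - L) * (1 / η) := by ring
      _ ≤ U := by linarith
  calc 2 - L / U = (U + (U - L)) / U := by field_simp; ring
    _ ≤ η := by rwa [div_le_iff₀ hU, mul_comm, ← div_le_iff₀ hη]

theorem one_div_one_sub_div_le_of_div_le_sub {c γ : ℝ} (hU : 0 < U) (hη : 0 < η) (hγ : 0 < γ)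
    (hI : U * c ≤ γ * I) (hIU : U / η ≤ U - I) : 1 / (1 - c / γ) ≤ η := by
  have div_le : U * (c / γ) ≤ I := by rwa [← mul_div_assoc, div_le_iff₀' hγ]
  have inv_η_le : 1 / η ≤ 1 - c / γ := by
    refine le_of_mul_le_mul_left ?_ hU
    calc U * (1 / η) = U / η := mul_one_div U η
      _ ≤ U - U * (c / γ) := by linarith
      _ = U * (1 - c / γ) := by ring
  exact (one_div_le hη (one_div_pos.2 hη |>.trans_le inv_η_le)).1 inv_η_le

end ConsistencyBounds

theorem stmt12_general {L U γ η : ℝ} {g : ℝ → ℝ} (hL : 0 < L) (hLU : L ≤ U) (hγ : 0 < γ)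
    (hη : 0 < η) (hg : IntervalIntegrable g volume L U) (hgU : g U ≤ 1)
    (hrob : ∀ x ∈ Icc L U, (1 / γ) * (1 + log (x / L)) ≤ g x)
    (hcons : ∀ x ∈ Icc L U, 1 / η ≤ g x)
    (hconsU : U / η ≤ U * g U - ∫ t in L..U, g t) :
    max (2 - L / U) (1 / (1 - log (U / L) / γ)) ≤ η := by
  have hU : 0 < U := hL.trans_le hLU
  have integral_upper : U / η ≤ U - ∫ t in L..U, g t :=
    hconsU.trans (sub_le_sub_right (mul_le_of_le_one_right hU.le hgU) _)
  have consistency_lower : (U - L) * (1 / η) ≤ ∫ t in L..U, g t :=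
    sub_mul_le_integral_of_forall_le hLU hg hcons
  have robustness_lower : U * log (U / L) ≤ γ * ∫ t in L..U, g t := by
    rw [← intervalIntegral.integral_const_mul]
    refine mul_log_div_le_integral_of_one_add_log_div_le hL.ne' hLU (hg.const_mul γ) fun x hx ↦ ?_
    rw [← div_le_iff₀' hγ, ← one_div_mul_eq_div]
    exact hrob x hx
  exact max_le (two_sub_div_le_of_div_le_sub hU hη consistency_lower integral_upper)
    (one_div_one_sub_div_le_of_div_le_sub hU hη hγ robustness_lower integral_upper)

/-- Lower bound on the consistency of any γ-robust learning-augmented online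
knapsack algorithm given an untrusted prediction of the critical value:
`η ≥ max { 2 − L/U , 1/(1 − ln(U/L)/γ) }`. -/
theorem stmt12 (L U γ η : ℝ) (g : ℝ → ℝ)
    (hL : 0 < L) (hLU : L < U)
    (hγ : 1 + Real.log (U / L) ≤ γ) (hη : 0 < η)
    (hmono : MonotoneOn g (Set.Icc L U))
    (hg01 : ∀ x ∈ Set.Icc L U, 0 ≤ g x ∧ g x ≤ 1)
    (hgU : g U = 1)
    (hrob : ∀ x ∈ Set.Icc L U, (1 / γ) * (1 + Real.log (x / L)) ≤ g x)
    (hcons : ∀ x ∈ Set.Icc L U, 1 / η ≤ g x)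
    (hconsU : U / η ≤ U * g U - ∫ t in L..U, g t) :
    max (2 - L / U) (1 / (1 - Real.log (U / L) / γ)) ≤ η := by
  have hγ_pos : 0 < γ := by linarith [log_pos ((one_lt_div hL).2 hLU)]
  exact stmt12_general hL hLU.le hγ_pos hη
    (uIcc_of_le hLU.le ▸ hmono).intervalIntegrable hgU.le hrob hcons hconsU
end

section
/- Let c ∈ [0, 1] and let p, q : ℕ → ℝ satisfy 0 ≤ p(i) ≤ q(i) for all i. Define sequences r and a by r(0) = a(0) = 0, r(i+1) = r(i) + p(i), and a(i+1) = a(i) + q(i) if a(i) < c·r(i+1), while a(i+1) = a(i) otherwise. Then a(i) ≥ c·r(i) for every i. -/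
section ThresholdRule

variable {M : Type*} [Add M] [LinearOrder M] [AddRightMono M]

lemma le_ite_lt_add {s t x y : M} (hst : t ≤ s + y) (hsx : s ≤ x) :
    t ≤ if x < t then x + y else x := by
  split_ifs with hxt
  · exact hst.trans (by gcongr)
  · exact not_lt.mp hxt

lemma le_of_succ_eq_ite_lt_add {t a q : ℕ → M} (h0 : t 0 ≤ a 0)
    (ht : ∀ i, t (i + 1) ≤ t i + q i)
    (ha : ∀ i, a (i + 1) = if a i < t (i + 1) then a i + q i else a i) (i : ℕ) :
    t i ≤ a i := by
  induction i with
  | zero => exact h0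
  | succ i ih =>
    rw [ha i]
    exact le_ite_lt_add (ht i) ih

end ThresholdRule

theorem stmt13_general {R : Type*} [Semiring R] [LinearOrder R] [IsOrderedRing R]
    {c : R} (hc : c ≤ 1) {p q : ℕ → R} (hpq : ∀ i, 0 ≤ p i ∧ p i ≤ q i)
    {r a : ℕ → R} (hr0 : r 0 = 0) (ha0 : a 0 = 0)
    (hr : ∀ i, r (i + 1) = r i + p i)
    (ha : ∀ i, a (i + 1) = if a i < c * r (i + 1) then a i + q i else a i) (i : ℕ) :
    c * r i ≤ a i := by
  have target_zero : c * r 0 ≤ a 0 := by rw [hr0, ha0, mul_zero]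
  have target_succ (j : ℕ) : c * r (j + 1) ≤ c * r j + q j := by
    obtain ⟨hp, hpq⟩ := hpq j
    calc c * r (j + 1) = c * r j + c * p j := by rw [hr, mul_add]
      _ ≤ c * r j + p j := by gcongr; exact mul_le_of_le_one_left hp hc
      _ ≤ c * r j + q j := by gcongr
  exact le_of_succ_eq_ite_lt_add (t := fun j ↦ c * r j) target_zero target_succ ha i

/-- Induction lemma behind the CONV fractional-to-integral conversion: the
integrally accepted value `a` always stays at least `c` times the simulated
fractional value `r`. -/
theorem stmt13 (c : ℝ) (hc0 : 0 ≤ c) (hc1 : c ≤ 1) (p q : ℕ → ℝ)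
    (hpq : ∀ i, 0 ≤ p i ∧ p i ≤ q i)
    (r a : ℕ → ℝ) (hr0 : r 0 = 0) (ha0 : a 0 = 0)
    (hr : ∀ i, r (i + 1) = r i + p i)
    (ha : ∀ i, a (i + 1) = if a i < c * r (i + 1) then a i + q i else a i) :
    ∀ i, c * r i ≤ a i :=
  stmt13_general hc1 hpq hr0 ha0 hr ha
end

section
/- In the CONV setup, the total value accepted by CONV satisfies Σ_{i accepted} v_i·w_i ≥ c·Σ_{i=1}^n v_i·x̃_i, where c = (1 − ε(K+1))/(1+δ). Consequently, if the simulated fractional solution is γ-competitive against a target profit P, i.e., γ·Σ_{i=1}^n v_i·x̃_i ≥ P, then CONV's integral profit is at least P·(1 − ε(K+1))/(γ·(1+δ)). -/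
open Finset

/-!
Within each value range CONV accepts an item exactly when the accepted value `A` has fallen below
`c` times the fractional value `R`. As an accepted item gains at least `c` times its fractional
value, `c * R ≤ A` persists in every range. Each item is booked in exactly one range, so summing
over the ranges compares the totals.
-/

section Ledger

variable {M κ : Type*} [AddCommMonoid M] [DecidableEq κ] {j : ℕ → κ} {g : ℕ → M} {F : ℕ → κ → M}

theorem ledger_eq_sum_filter (h_zero : ∀ k, F 0 k = 0)
    (h_succ : ∀ i k, F (i + 1) k = F i k + if k = j i then g i else 0) (n : ℕ) (k : κ) :
    F n k = ∑ i ∈ range n with j i = k, g i := by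
  induction n with
  | zero => simp [h_zero]
  | succ n ih => rw [h_succ, ih, sum_filter, sum_filter, sum_range_succ]; simp only [eq_comm]

theorem sum_image_ledger (h_zero : ∀ k, F 0 k = 0)
    (h_succ : ∀ i k, F (i + 1) k = F i k + if k = j i then g i else 0) (n : ℕ) :
    ∑ k ∈ (range n).image j, F n k = ∑ i ∈ range n, g i := by
  simp only [ledger_eq_sum_filter h_zero h_succ n]
  exact sum_fiberwise_of_maps_to (fun _ => mem_image_of_mem j) g

end Ledger

section Conv

variable {S κ : Type*} [Semiring S] [LinearOrder S]

/-- The value CONV gains from item `i`: its full value `a i` if the accepted value `A` of its range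
`j i` is below `c` times the fractional value `R` of that range, and `0` otherwise. The tables are
indexed by time: `A i` is read before item `i` is processed, `R (i + 1)` after its update. -/
def convGain (c : S) (j : ℕ → κ) (a : ℕ → S) (A R : ℕ → κ → S) (i : ℕ) : S :=
  if A i (j i) < c * R (i + 1) (j i) then a i else 0

/-- `A` and `R` are the successive states of CONV's two arrays when item `i` lies in range `j i`,
has full value `a i`, and contributes `r i` to the value of the fractional solution. -/
structure IsConvRun [DecidableEq κ] (c : S) (j : ℕ → κ) (r a : ℕ → S) (A R : ℕ → κ → S) :
    Prop where
  R_zero : ∀ k, R 0 k = 0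
  A_zero : ∀ k, A 0 k = 0
  R_succ : ∀ i k, R (i + 1) k = R i k + if k = j i then r i else 0
  A_succ : ∀ i k, A (i + 1) k =
    A i k + if A i (j i) < c * R (i + 1) (j i) ∧ k = j i then a i else 0

namespace IsConvRun

variable [DecidableEq κ] {c : S} {j : ℕ → κ} {r a : ℕ → S} {A R : ℕ → κ → S} {n : ℕ}

theorem A_succ_eq_add_convGain (run : IsConvRun c j r a A R) (i : ℕ) (k : κ) :
    A (i + 1) k = A i k + if k = j i then convGain c j a A R i else 0 := by
  simp only [run.A_succ, convGain, ← ite_and, and_comm]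

variable [IsOrderedAddMonoid S]

theorem mul_R_le_A (run : IsConvRun c j r a A R) (hra : ∀ i < n, c * r i ≤ a i) (k : κ) :
    c * R n k ≤ A n k := by
  induction n with
  | zero => simp [run.R_zero, run.A_zero]
  | succ n ih =>
    have ih : c * R n k ≤ A n k := ih fun i hi => hra i (hi.trans n.lt_succ_self)
    rw [run.A_succ_eq_add_convGain]
    by_cases hk : k = j n
    · rw [if_pos hk, convGain, ← hk]
      split_ifs with accepted
      · rw [run.R_succ, if_pos hk, mul_add]
        exact add_le_add ih (hra n n.lt_succ_self)
      · rwa [add_zero, ← not_lt]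
    · simpa only [run.R_succ, if_neg hk, add_zero] using ih

theorem mul_sum_le_sum_convGain (run : IsConvRun c j r a A R) (hra : ∀ i < n, c * r i ≤ a i) :
    c * ∑ i ∈ range n, r i ≤ ∑ i ∈ range n, convGain c j a A R i := by
  rw [← sum_image_ledger run.R_zero run.R_succ,
    ← sum_image_ledger run.A_zero run.A_succ_eq_add_convGain, mul_sum]
  exact sum_le_sum fun k _ => run.mul_R_le_A hra k

end IsConvRun

end Conv

theorem one_sub_div_one_add_mem_Icc {𝕜 : Type*} [Field 𝕜] [LinearOrder 𝕜]
    [IsStrictOrderedRing 𝕜] {s δ : 𝕜} (hs : s ∈ Set.Icc 0 1) (hδ : 0 ≤ δ) :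
    (1 - s) / (1 + δ) ∈ Set.Icc 0 1 := by
  have one_add_nonneg : 0 ≤ 1 + δ := by positivity
  exact ⟨div_nonneg (sub_nonneg.2 hs.2) one_add_nonneg,
    div_le_one_of_le₀ (by linarith [hs.1]) one_add_nonneg⟩

theorem stmt14_general {𝕜 κ : Type*} [Field 𝕜] [LinearOrder 𝕜] [IsStrictOrderedRing 𝕜]
    [DecidableEq κ] {n : ℕ} {c : 𝕜} {j : ℕ → κ} {v w x : ℕ → 𝕜} {A R : ℕ → κ → 𝕜}
    (hc : c ∈ Set.Icc 0 1) (hv : ∀ i < n, 0 ≤ v i) (hx : ∀ i < n, 0 ≤ x i ∧ x i ≤ w i)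
    (run : IsConvRun c j (fun i => v i * x i) (fun i => v i * w i) A R) :
    c * ∑ i ∈ range n, v i * x i
        ≤ ∑ i ∈ range n, convGain c j (fun i => v i * w i) A R i ∧
    ∀ γ P : 𝕜, 0 < γ → P ≤ γ * ∑ i ∈ range n, v i * x i →
      P / γ * c ≤ ∑ i ∈ range n, convGain c j (fun i => v i * w i) A R i := by
  have fractional_le_full (i : ℕ) (hi : i < n) : c * (v i * x i) ≤ v i * w i :=
    calc c * (v i * x i) ≤ v i * x i :=
          mul_le_of_le_one_left (mul_nonneg (hv i hi) (hx i hi).1) hc.2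
      _ ≤ v i * w i := mul_le_mul_of_nonneg_left (hx i hi).2 (hv i hi)
  have profit := run.mul_sum_le_sum_convGain fractional_le_full
  refine ⟨profit, fun γ P hγ hP => le_trans ?_ profit⟩
  rw [mul_comm]
  exact mul_le_mul_of_nonneg_left ((div_le_iff₀' hγ).2 hP) hc.1

/-- In the CONV setup, the total value accepted by CONV is at least
`c = (1 − ε(K+1))/(1+δ)` times the value of the simulated fractional solution;
consequently, if the fractional solution is γ-competitive against a target
profit `P`, CONV's integral profit is at least `P(1 − ε(K+1))/(γ(1+δ))`. -/
theorem stmt14 (n K : ℕ) (L δ ε c : ℝ)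
    (hL : 0 < L) (hδ : 0 < δ) (hε : 0 < ε) (hεK : ε * (K + 1) ≤ 1)
    (hc : c = (1 - ε * (K + 1)) / (1 + δ))
    (j : ℕ → ℕ) (v w xt : ℕ → ℝ)
    (hj : ∀ i < n, j i ≤ K)
    (hv : ∀ i < n, L * (1 + δ) ^ (j i) / (1 + δ) < v i ∧ v i ≤ L * (1 + δ) ^ (j i))
    (hw : ∀ i < n, 0 ≤ w i ∧ w i ≤ ε)
    (hxt : ∀ i < n, 0 ≤ xt i ∧ xt i ≤ w i)
    (hsum : ∑ i ∈ Finset.range n, xt i ≤ 1)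
    (A R : ℕ → ℕ → ℝ)
    (hR0 : ∀ k, R 0 k = 0) (hA0 : ∀ k, A 0 k = 0)
    (hRrec : ∀ i k, R (i + 1) k = R i k + (if k = j i then v i * xt i else 0))
    (hArec : ∀ i k, A (i + 1) k =
      A i k + (if A i (j i) < c * R (i + 1) (j i) ∧ k = j i then v i * w i else 0)) :
    (c * ∑ i ∈ Finset.range n, v i * xt i
        ≤ ∑ i ∈ Finset.range n,
            (if A i (j i) < c * R (i + 1) (j i) then v i * w i else 0)) ∧
    (∀ γ P : ℝ, 0 < γ → P ≤ γ * ∑ i ∈ Finset.range n, v i * xt i →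
      P * (1 - ε * (K + 1)) / (γ * (1 + δ))
        ≤ ∑ i ∈ Finset.range n,
            (if A i (j i) < c * R (i + 1) (j i) then v i * w i else 0)) := by
  have hc_mem : c ∈ Set.Icc 0 1 := hc ▸ one_sub_div_one_add_mem_Icc ⟨by positivity, hεK⟩ hδ.le
  have hv_nonneg (i : ℕ) (hi : i < n) : 0 ≤ v i := le_trans (by positivity) (hv i hi).1.le
  simp only [mul_div_mul_comm, ← hc]
  exact stmt14_general hc_mem hv_nonneg hxt ⟨hR0, hA0, hRrec, hArec⟩
end

section
/- In the CONV setup, the total weight accepted by CONV is feasible: Σ_{i accepted} w_i ≤ ε·(K+1) + (1 − ε(K+1))·Σ_{i=1}^n x̃_i ≤ 1. -/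
open Finset

/-!
Fix a range of values, all in `[a, b]`. Whenever CONV accepts an item of this range, the weight `W`
accepted from it so far and the fractional load `X` of the range satisfy
`a * W ≤ A < c * R ≤ c * b * X ≤ (1 - ε * (K + 1)) * a * X`, so `W ≤ (1 - ε * (K + 1)) * X`. The
accepted item adds at most `ε`, and while items are rejected `X` can only grow; hence each range
costs at most `ε` beyond its share `(1 - ε * (K + 1)) * X`. Summing over the `K + 1` ranges gives
the bound.
-/

section Sums

variable {ι κ M 𝕜 : Type*} [DecidableEq κ]

theorem eq_sum_filter_range_of_succ_eq_add_ite [AddCommMonoid M] {F : ℕ → κ → M} {j : ℕ → κ}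
    {f : ℕ → M} (zero : ∀ k, F 0 k = 0)
    (succ : ∀ i k, F (i + 1) k = F i k + if k = j i then f i else 0) (m : ℕ) (k : κ) :
    F m k = ∑ i ∈ range m with j i = k, f i := by
  induction m with
  | zero => simp [zero]
  | succ m ih => rw [succ, ih, sum_filter, sum_filter, sum_range_succ]; simp only [eq_comm]

theorem sum_filter_range_le_of_forall_add_le [AddCommMonoid M] [PartialOrder M]
    [IsOrderedAddMonoid M] {p : ℕ → Prop} [DecidablePred p] {y : ℕ → M} {B : M} {n : ℕ}
    (hB : 0 ≤ B)
    (h : ∀ i < n, p i → y i ≤ 0 ∨ ∑ l ∈ range i with p l, y l + y i ≤ B) :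
    ∑ i ∈ range n with p i, y i ≤ B := by
  induction n with
  | zero => simpa using hB
  | succ n ih =>
    have prev_le : ∑ i ∈ range n with p i, y i ≤ B := ih fun i hi => h i (hi.trans n.lt_succ_self)
    rw [range_add_one, filter_insert]
    split_ifs with hp
    · rw [sum_insert (by simp), add_comm]
      rcases h n n.lt_succ_self hp with nonpos | le_bound
      · exact (add_le_of_nonpos_right nonpos).trans prev_le
      · exact le_bound
    · exact prev_le

theorem sum_le_mul_card_add_mul_sum_of_fiberwise [CommRing 𝕜] [PartialOrder 𝕜]
    [IsOrderedAddMonoid 𝕜] {s : Finset ι} {t : Finset κ} {j : ι → κ} {x y : ι → 𝕜} {ε g : 𝕜}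
    (hj : ∀ i ∈ s, j i ∈ t)
    (h : ∀ k ∈ t, ∑ i ∈ s with j i = k, y i ≤ ε + g * ∑ i ∈ s with j i = k, x i) :
    ∑ i ∈ s, y i ≤ ε * #t + g * ∑ i ∈ s, x i :=
  calc ∑ i ∈ s, y i = ∑ k ∈ t, ∑ i ∈ s with j i = k, y i := (sum_fiberwise_of_maps_to hj y).symm
    _ ≤ ∑ k ∈ t, (ε + g * ∑ i ∈ s with j i = k, x i) := sum_le_sum h
    _ = ε * #t + g * ∑ i ∈ s, x i := by
      rw [sum_add_distrib, sum_const, nsmul_eq_mul, mul_comm, ← mul_sum,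
        sum_fiberwise_of_maps_to hj x]

end Sums

section Conv

variable {κ 𝕜 : Type*} [CommRing 𝕜] [LinearOrder 𝕜]

/-- The amount `x i` of item `i` that CONV takes: all of its weight `w i` or nothing. The test uses
`A` before and `R` after the update at item `i`. -/
def acceptedWeight (c : 𝕜) (j : ℕ → κ) (w : ℕ → 𝕜) (A R : ℕ → κ → 𝕜) (i : ℕ) : 𝕜 :=
  if A i (j i) < c * R (i + 1) (j i) then w i else 0

/-- `A` and `R` are the histories of CONV's two arrays on items `0, 1, …` with range indices `j`,
unit values `v`, weights `w` and fractional amounts `x`: `A m` and `R m` are the arrays after the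
first `m` items. -/
structure IsConvRun_s15 [DecidableEq κ] (c : 𝕜) (j : ℕ → κ) (v w x : ℕ → 𝕜) (A R : ℕ → κ → 𝕜) :
    Prop where
  R_zero : ∀ k, R 0 k = 0
  A_zero : ∀ k, A 0 k = 0
  R_succ : ∀ i k, R (i + 1) k = R i k + (if k = j i then v i * x i else 0)
  A_succ : ∀ i k, A (i + 1) k =
    A i k + (if A i (j i) < c * R (i + 1) (j i) ∧ k = j i then v i * w i else 0)

variable {c : 𝕜} {j : ℕ → κ} {v w x : ℕ → 𝕜} {A R : ℕ → κ → 𝕜}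

theorem acceptedWeight_nonneg {i : ℕ} (hw : 0 ≤ w i) : 0 ≤ acceptedWeight c j w A R i := by
  unfold acceptedWeight
  split_ifs
  exacts [hw, le_rfl]

namespace IsConvRun_s15

variable [DecidableEq κ]

theorem R_eq_sum (run : IsConvRun_s15 c j v w x A R) (m : ℕ) (k : κ) :
    R m k = ∑ i ∈ range m with j i = k, v i * x i :=
  eq_sum_filter_range_of_succ_eq_add_ite run.R_zero run.R_succ m k

theorem A_eq_sum (run : IsConvRun_s15 c j v w x A R) (m : ℕ) (k : κ) :
    A m k = ∑ i ∈ range m with j i = k, v i * acceptedWeight c j w A R i := by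
  refine eq_sum_filter_range_of_succ_eq_add_ite run.A_zero (fun i k => ?_) m k
  grind [run.A_succ i k, acceptedWeight]

variable [IsStrictOrderedRing 𝕜] {a b : 𝕜} {k : κ} {m : ℕ}

theorem R_le_mul_sum (run : IsConvRun_s15 c j v w x A R)
    (hv : ∀ i < m, j i = k → v i ≤ b) (hx : ∀ i < m, 0 ≤ x i) :
    R m k ≤ b * ∑ i ∈ range m with j i = k, x i := by
  rw [run.R_eq_sum, mul_sum]
  refine sum_le_sum fun i hi => ?_
  obtain ⟨him, hik⟩ : i < m ∧ j i = k := by simpa using hi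
  exact mul_le_mul_of_nonneg_right (hv i him hik) (hx i him)

theorem mul_sum_acceptedWeight_le_A (run : IsConvRun_s15 c j v w x A R)
    (hv : ∀ i < m, j i = k → a ≤ v i) (hw : ∀ i < m, 0 ≤ w i) :
    a * ∑ i ∈ range m with j i = k, acceptedWeight c j w A R i ≤ A m k := by
  rw [run.A_eq_sum, mul_sum]
  refine sum_le_sum fun i hi => ?_
  obtain ⟨him, hik⟩ : i < m ∧ j i = k := by simpa using hi
  exact mul_le_mul_of_nonneg_right (hv i him hik) (acceptedWeight_nonneg (hw i him))

variable {g ε : 𝕜}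

theorem sum_acceptedWeight_le_of_accepts (run : IsConvRun_s15 c j v w x A R)
    (ha : 0 < a) (hc : 0 ≤ c) (hcb : c * b ≤ g * a)
    (hv : ∀ i < m + 1, j i = k → a ≤ v i ∧ v i ≤ b) (hw : ∀ i < m, 0 ≤ w i)
    (hx : ∀ i < m + 1, 0 ≤ x i) (accepts : A m k < c * R (m + 1) k) :
    ∑ i ∈ range m with j i = k, acceptedWeight c j w A R i ≤
      g * ∑ i ∈ range (m + 1) with j i = k, x i := by
  set W := ∑ i ∈ range m with j i = k, acceptedWeight c j w A R i
  set X := ∑ i ∈ range (m + 1) with j i = k, x i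
  have X_nonneg : 0 ≤ X := sum_nonneg fun i hi => hx i (mem_range.mp (mem_filter.mp hi).1)
  have W_le_A : a * W ≤ A m k :=
    run.mul_sum_acceptedWeight_le_A (fun i hi hik => (hv i (by lia) hik).1) hw
  have R_le_X : R (m + 1) k ≤ b * X := run.R_le_mul_sum (fun i hi hik => (hv i hi hik).2) hx
  refine le_of_mul_le_mul_left ?_ ha
  calc a * W ≤ c * R (m + 1) k := W_le_A.trans accepts.le
    _ ≤ c * (b * X) := mul_le_mul_of_nonneg_left R_le_X hc
    _ = c * b * X := (mul_assoc c b X).symm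
    _ ≤ g * a * X := mul_le_mul_of_nonneg_right hcb X_nonneg
    _ = a * (g * X) := by ring

theorem sum_acceptedWeight_filter_le (run : IsConvRun_s15 c j v w x A R)
    (ha : 0 < a) (hc : 0 ≤ c) (hg : 0 ≤ g) (hε : 0 ≤ ε) (hcb : c * b ≤ g * a)
    (hv : ∀ i < m, j i = k → a ≤ v i ∧ v i ≤ b) (hw : ∀ i < m, 0 ≤ w i ∧ w i ≤ ε)
    (hx : ∀ i < m, 0 ≤ x i) :
    ∑ i ∈ range m with j i = k, acceptedWeight c j w A R i ≤
      ε + g * ∑ i ∈ range m with j i = k, x i := by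
  have hx_fiber : ∀ i ∈ (range m).filter (j · = k), 0 ≤ x i := fun i hi =>
    hx i (mem_range.mp (mem_filter.mp hi).1)
  refine sum_filter_range_le_of_forall_add_le
    (add_nonneg hε (mul_nonneg hg (sum_nonneg hx_fiber))) fun i him hik => ?_
  by_cases accepts : A i (j i) < c * R (i + 1) (j i)
  · right
    have load_le : ∑ l ∈ range (i + 1) with j l = k, x l ≤ ∑ l ∈ range m with j l = k, x l :=
      sum_le_sum_of_subset_of_nonneg (filter_subset_filter _ (range_mono him))
        fun l hl _ => hx_fiber l hl
    have before_le := run.sum_acceptedWeight_le_of_accepts ha hc hcb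
      (fun l hl => hv l (by lia)) (fun l hl => (hw l (by lia)).1) (fun l hl => hx l (by lia))
      (hik ▸ accepts)
    rw [add_comm, acceptedWeight, if_pos accepts]
    exact add_le_add (hw i him).2 (before_le.trans (mul_le_mul_of_nonneg_left load_le hg))
  · left
    rw [acceptedWeight, if_neg accepts]

end IsConvRun_s15

end Conv

theorem stmt15_general {κ 𝕜 : Type*} [DecidableEq κ] [Field 𝕜] [LinearOrder 𝕜]
    [IsStrictOrderedRing 𝕜] {n : ℕ} {s : Finset κ} {ρ ε c : 𝕜} {u : κ → 𝕜} {j : ℕ → κ}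
    {v w x : ℕ → 𝕜} {A R : ℕ → κ → 𝕜} (run : IsConvRun_s15 c j v w x A R)
    (hu : ∀ k ∈ s, 0 < u k) (hρ : 0 < ρ) (hε : 0 ≤ ε) (hεs : ε * #s ≤ 1)
    (hc : c = (1 - ε * #s) / ρ) (hj : ∀ i < n, j i ∈ s)
    (hv : ∀ i < n, u (j i) / ρ ≤ v i ∧ v i ≤ u (j i)) (hw : ∀ i < n, 0 ≤ w i ∧ w i ≤ ε)
    (hx : ∀ i < n, 0 ≤ x i) (hsum : ∑ i ∈ range n, x i ≤ 1) :
    ∑ i ∈ range n, acceptedWeight c j w A R i ≤ ε * #s + (1 - ε * #s) * ∑ i ∈ range n, x i ∧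
      ε * #s + (1 - ε * #s) * ∑ i ∈ range n, x i ≤ 1 := by
  have slack_nonneg : 0 ≤ 1 - ε * #s := sub_nonneg.mpr hεs
  have hc_nonneg : 0 ≤ c := hc ▸ div_nonneg slack_nonneg hρ.le
  constructor
  · refine sum_le_mul_card_add_mul_sum_of_fiberwise (fun i hi => hj i (mem_range.mp hi)) ?_
    intro k hk
    have ratio : c * u k ≤ (1 - ε * #s) * (u k / ρ) := by rw [hc, div_mul_eq_mul_div, mul_div_assoc]
    exact run.sum_acceptedWeight_filter_le (div_pos (hu k hk) hρ) hc_nonneg slack_nonneg hε ratio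
      (fun i hi hik => hik ▸ hv i hi) hw hx
  · linarith [mul_le_of_le_one_right slack_nonneg hsum]

/-- In the CONV setup, the total weight accepted by CONV is feasible:
it is at most `ε(K+1) + (1 − ε(K+1))·Σ x̃ ≤ 1`. -/
theorem stmt15 (n K : ℕ) (L δ ε c : ℝ)
    (hL : 0 < L) (hδ : 0 < δ) (hε : 0 < ε) (hεK : ε * (K + 1) ≤ 1)
    (hc : c = (1 - ε * (K + 1)) / (1 + δ))
    (j : ℕ → ℕ) (v w xt : ℕ → ℝ)
    (hj : ∀ i < n, j i ≤ K)
    (hv : ∀ i < n, L * (1 + δ) ^ (j i) / (1 + δ) < v i ∧ v i ≤ L * (1 + δ) ^ (j i))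
    (hw : ∀ i < n, 0 ≤ w i ∧ w i ≤ ε)
    (hxt : ∀ i < n, 0 ≤ xt i ∧ xt i ≤ w i)
    (hsum : ∑ i ∈ Finset.range n, xt i ≤ 1)
    (A R : ℕ → ℕ → ℝ)
    (hR0 : ∀ k, R 0 k = 0) (hA0 : ∀ k, A 0 k = 0)
    (hRrec : ∀ i k, R (i + 1) k = R i k + (if k = j i then v i * xt i else 0))
    (hArec : ∀ i k, A (i + 1) k =
      A i k + (if A i (j i) < c * R (i + 1) (j i) ∧ k = j i then v i * w i else 0)) :
    (∑ i ∈ Finset.range n, (if A i (j i) < c * R (i + 1) (j i) then w i else 0)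
        ≤ ε * (K + 1) + (1 - ε * (K + 1)) * ∑ i ∈ Finset.range n, xt i) ∧
    (ε * (K + 1) + (1 - ε * (K + 1)) * ∑ i ∈ Finset.range n, xt i ≤ 1) := by
  simpa [acceptedWeight] using stmt15_general (s := range (K + 1)) (u := fun k => L * (1 + δ) ^ k)
    ⟨hR0, hA0, hRrec, hArec⟩ (fun k _ => by positivity) (by positivity) hε.le (by simpa using hεK)
    (by simpa using hc) (by simpa [Nat.lt_succ_iff] using hj)
    (fun i hi => ⟨(hv i hi).1.le, (hv i hi).2⟩) hw (fun i hi => (hxt i hi).1) hsum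
end

section
/- Fix d > 0, δ > 0, ε ≥ 0 and c ≥ 0 with c·(1+δ) ≤ 1. Items t = 1,…,m have unit values ρ_t ∈ [d, d·(1+δ)], weights ω_t ∈ [0, ε], and fractional amounts u_t ∈ [0, ω_t]. Define R_t = Σ_{s ≤ t} ρ_s·u_s and process the items in order with A_0 = 0: item t is accepted iff A_{t−1} < c·R_t, and A_t = A_{t−1} + ρ_t·ω_t if t is accepted, A_t = A_{t−1} otherwise. Then the total accepted weight satisfies Σ_{t accepted} ω_t ≤ ε + c·(1+δ)·Σ_{t=1}^m u_t. -/
open Finset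

/-!
Before an item is accepted, the weight `W` accepted so far satisfies `d * W ≤ A < c * R`, because
every unit value is at least `d`; and `c * R ≤ d * (c * (1 + δ) * ∑ u)`, because every unit value is
at most `d * (1 + δ)`. So each acceptance, in particular the last one, starts from a weight of at
most `c * (1 + δ) * ∑ u`, and it adds at most `ε`.
-/

theorem sum_range_ite_le_add {M : Type*} [AddCommMonoid M] [Preorder M] [IsOrderedAddMonoid M]
    {p : ℕ → Prop} [DecidablePred p] {w : ℕ → M} {ε B : M} {n : ℕ} (hεB : 0 ≤ ε + B)
    (hw : ∀ t < n, p t → w t ≤ ε)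
    (hB : ∀ t < n, p t → ∑ s ∈ range t, (if p s then w s else 0) ≤ B) :
    ∑ t ∈ range n, (if p t then w t else 0) ≤ ε + B := by
  induction n with
  | zero => simpa using hεB
  | succ n ih =>
    rw [sum_range_succ]
    by_cases hp : p n
    · rw [if_pos hp, add_comm]
      exact add_le_add (hw n n.lt_succ_self hp) (hB n n.lt_succ_self hp)
    · rw [if_neg hp, add_zero]
      exact ih (fun t ht => hw t (ht.trans n.lt_succ_self))
        (fun t ht => hB t (ht.trans n.lt_succ_self))

theorem eq_sum_range_ite_of_succ_eq_ite {M : Type*} [AddCommMonoid M]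
    {p : ℕ → Prop} [DecidablePred p] {A v : ℕ → M} {n : ℕ} (hA0 : A 0 = 0)
    (hA : ∀ t < n, A (t + 1) = if p t then A t + v t else A t) :
    A n = ∑ t ∈ range n, if p t then v t else 0 := by
  refine (sum_range_induction _ A hA0 n fun t ht => ?_).symm
  rw [hA t ht]
  split_ifs
  · rfl
  · rw [add_zero]

theorem sum_range_mul_le_mul_sum_range {R : Type*} [Semiring R] [PartialOrder R] [IsOrderedRing R]
    {D : R} {n m : ℕ} {ρ u : ℕ → R} (hnm : n ≤ m)
    (hρ : ∀ t < m, 0 ≤ ρ t ∧ ρ t ≤ D) (hu : ∀ t < m, 0 ≤ u t) :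
    ∑ t ∈ range n, ρ t * u t ≤ D * ∑ t ∈ range m, u t := by
  simp only [← mem_range] at hρ hu
  calc ∑ t ∈ range n, ρ t * u t
      ≤ ∑ t ∈ range m, ρ t * u t :=
        sum_le_sum_of_subset_of_nonneg (range_subset_range.2 hnm)
          fun t ht _ => mul_nonneg (hρ t ht).1 (hu t ht)
    _ ≤ ∑ t ∈ range m, D * u t :=
        sum_le_sum fun t ht => mul_le_mul_of_nonneg_right (hρ t ht).2 (hu t ht)
    _ = D * ∑ t ∈ range m, u t := (mul_sum ..).symm

theorem sum_accepted_le_of_threshold_le {R : Type*} [Semiring R] [LinearOrder R]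
    [IsStrictOrderedRing R] {d ε B : R} {m : ℕ} {v w T A : ℕ → R}
    (hd : 0 < d) (hε : 0 ≤ ε) (hB : 0 ≤ B)
    (hv : ∀ t < m, d * w t ≤ v t) (hw : ∀ t < m, w t ≤ ε) (hT : ∀ t < m, T t ≤ d * B)
    (hA0 : A 0 = 0) (hA : ∀ t < m, A (t + 1) = if A t < T t then A t + v t else A t) :
    ∑ t ∈ range m, (if A t < T t then w t else 0) ≤ ε + B := by
  refine sum_range_ite_le_add (add_nonneg hε hB) (fun t ht _ => hw t ht) fun t ht hacc => ?_
  refine le_of_mul_le_mul_left ?_ hd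
  calc d * ∑ s ∈ range t, (if A s < T s then w s else 0)
      = ∑ s ∈ range t, (if A s < T s then d * w s else 0) := by
        simp only [mul_sum, mul_ite, mul_zero]
    _ ≤ ∑ s ∈ range t, (if A s < T s then v s else 0) := by
        refine sum_le_sum fun s hs => ?_
        have hsm : s < m := (mem_range.1 hs).trans ht
        split_ifs
        exacts [hv s hsm, le_rfl]
    _ = A t := (eq_sum_range_ite_of_succ_eq_ite hA0 fun s hs => hA s (hs.trans ht)).symm
    _ ≤ d * B := hacc.le.trans (hT t ht)

theorem stmt16_general {R : Type*} [CommSemiring R] [LinearOrder R] [IsStrictOrderedRing R]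
    {d δ ε c : R} (hd : 0 < d) (hε : 0 ≤ ε) (hc : 0 ≤ c)
    {m : ℕ} {ρ ω u : ℕ → R}
    (hρ : ∀ t < m, d ≤ ρ t ∧ ρ t ≤ d * (1 + δ))
    (hω : ∀ t < m, 0 ≤ ω t ∧ ω t ≤ ε)
    (hu : ∀ t < m, 0 ≤ u t)
    {A : ℕ → R} (hA0 : A 0 = 0)
    (hA : ∀ t < m, A (t + 1) =
      if A t < c * ∑ s ∈ range (t + 1), ρ s * u s then A t + ρ t * ω t else A t) :
    ∑ t ∈ range m, (if A t < c * ∑ s ∈ range (t + 1), ρ s * u s then ω t else 0)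
      ≤ ε + c * (1 + δ) * ∑ t ∈ range m, u t := by
  have threshold_le : ∀ n ≤ m,
      c * ∑ s ∈ range n, ρ s * u s ≤ d * (c * (1 + δ) * ∑ t ∈ range m, u t) := fun n hn =>
    calc c * ∑ s ∈ range n, ρ s * u s
        ≤ c * (d * (1 + δ) * ∑ t ∈ range m, u t) :=
          mul_le_mul_of_nonneg_left (sum_range_mul_le_mul_sum_range hn
            (fun t ht => ⟨hd.le.trans (hρ t ht).1, (hρ t ht).2⟩) hu) hc
      _ = d * (c * (1 + δ) * ∑ t ∈ range m, u t) := by ring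
  have bound_nonneg : 0 ≤ c * (1 + δ) * ∑ t ∈ range m, u t :=
    nonneg_of_mul_nonneg_right (by simpa using threshold_le 0 m.zero_le) hd
  exact sum_accepted_le_of_threshold_le hd hε bound_nonneg
    (fun t ht => mul_le_mul_of_nonneg_right (hρ t ht).1 (hω t ht).1) (fun t ht => (hω t ht).2)
    (fun t ht => threshold_le (t + 1) ht) hA0 hA

/-- Per-range weight bound for the CONV conversion: within a single value
range (values between `d` and `d(1+δ)`), the total weight of items accepted
integrally is at most `ε + c(1+δ)` times the total fractional amount. -/
theorem stmt16 (d δ ε c : ℝ) (hd : 0 < d) (hδ : 0 < δ) (hε : 0 ≤ ε) (hc : 0 ≤ c)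
    (hcδ : c * (1 + δ) ≤ 1)
    (m : ℕ) (ρ ω u : ℕ → ℝ)
    (hρ : ∀ t < m, d ≤ ρ t ∧ ρ t ≤ d * (1 + δ))
    (hω : ∀ t < m, 0 ≤ ω t ∧ ω t ≤ ε)
    (hu : ∀ t < m, 0 ≤ u t ∧ u t ≤ ω t)
    (A : ℕ → ℝ) (hA0 : A 0 = 0)
    (hArec : ∀ t, A (t + 1) =
      if A t < c * ∑ s ∈ Finset.range (t + 1), ρ s * u s then A t + ρ t * ω t else A t) :
    ∑ t ∈ Finset.range m,
        (if A t < c * ∑ s ∈ Finset.range (t + 1), ρ s * u s then ω t else 0)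
      ≤ ε + c * (1 + δ) * ∑ t ∈ Finset.range m, u t :=
  stmt16_general hd hε hc hρ hω (fun t ht => (hu t ht).1) hA0 fun t _ => hArec t
end

section
/- Let 0 < L < U and ε ∈ (0,1), and consider the two-item fractional knapsack instance (v₁, w₁) = (L, 1), (v₂, w₂) = (U, 1 − ε). The critical value of this instance is L; the naive prediction-following algorithm PP-n, which greedily fully accepts every item of unit value at least the predicted critical value L until capacity 1 is filled, accepts all of the first item and earns profit exactly L, while the allocation z₁ = ε, z₂ = 1 − ε is feasible with profit (1 − ε)·U + ε·L ≤ OPT. Consequently, for every c < U/L there exists ε ∈ (0,1) with ((1 − ε)·U + ε·L)/L > c; hence PP-n's worst-case competitive ratio is at least U/L even with a correct point prediction of the critical value. -/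
open Finset

/-!
The first item alone fills the knapsack and its unit value equals the predicted critical value, so
PP-n spends all its capacity on value `L`. An optimal solution instead fills all but `ε` of the
capacity with value `U`, so its profit tends to `U` as `ε → 0`.
-/

/-- The critical value of a fractional knapsack instance with unit values `v`, weights `w` and
capacity `1`: the least unit value in the instance whose strictly more valuable competitors leave
some capacity free, i.e. the least one admitted by the greedy offline optimum. -/
def IsCriticalValue_s17 {ι : Type*} [Fintype ι] (v w : ι → ℝ) (x : ℝ) : Prop :=
  IsLeast {u : ℝ | (∃ i, v i = u) ∧ ∑ i with u < v i, w i < 1} x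

theorem isCriticalValue_of_forall_le {ι : Type*} [Fintype ι] {v w : ι → ℝ} {i : ι}
    (hmin : ∀ j, v i ≤ v j) (hw : ∑ j with v i < v j, w j < 1) : IsCriticalValue_s17 v w (v i) :=
  ⟨⟨⟨i, rfl⟩, hw⟩, by rintro _ ⟨⟨j, rfl⟩, -⟩; exact hmin j⟩

/-- The profit of the naive prediction-following algorithm PP-n with predicted critical value `θ`
and remaining capacity `C` on a list of arriving items `(unit value, weight)`: an item of unit value
at least `θ` is accepted as far as the remaining capacity permits, any other item is rejected. -/
noncomputable def ppnProfit (θ : ℝ) : ℝ → List (ℝ × ℝ) → ℝ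
  | _, [] => 0
  | C, (v, w) :: items =>
    if θ ≤ v then v * min w C + ppnProfit θ (C - min w C) items else ppnProfit θ C items

theorem ppnProfit_pair {θ v₁ v₂ : ℝ} (C w₁ w₂ : ℝ) (h₁ : θ ≤ v₁) (h₂ : θ ≤ v₂) :
    ppnProfit θ C [(v₁, w₁), (v₂, w₂)] = v₁ * min w₁ C + v₂ * min w₂ (C - min w₁ C) := by
  simp [ppnProfit, h₁, h₂]

theorem ppnProfit_zero_capacity (θ : ℝ) {items : List (ℝ × ℝ)} (hw : ∀ p ∈ items, 0 ≤ p.2) :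
    ppnProfit θ 0 items = 0 := by
  induction items with
  | nil => rfl
  | cons p items ih =>
    obtain ⟨hp, hitems⟩ := List.forall_mem_cons.mp hw
    simp [ppnProfit, min_eq_right hp, ih hitems]

theorem ppnProfit_cons_of_capacity_le {θ C v w : ℝ} {items : List (ℝ × ℝ)} (hv : θ ≤ v)
    (hC : C ≤ w) (hw : ∀ p ∈ items, 0 ≤ p.2) : ppnProfit θ C ((v, w) :: items) = v * C := by
  simp [ppnProfit, hv, min_eq_right hC, ppnProfit_zero_capacity θ hw]

open Topology in
theorem exists_lineMap_mem_of_mem_nhds {E : Type*} [AddCommGroup E] [Module ℝ E]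
    [TopologicalSpace E] [IsTopologicalAddGroup E] [ContinuousSMul ℝ E] {a : E} {s : Set E}
    (hs : s ∈ 𝓝 a) (b : E) : ∃ t ∈ Set.Ioo (0 : ℝ) 1, AffineMap.lineMap a b t ∈ s := by
  have hlim : Filter.Tendsto (AffineMap.lineMap a b : ℝ → E) (𝓝[>] 0) (𝓝 a) :=
    (AffineMap.lineMap_continuous.tendsto' 0 a (AffineMap.lineMap_apply_zero a b)).mono_left
      nhdsWithin_le_nhds
  exact Filter.nonempty_of_mem (Filter.inter_mem (Ioo_mem_nhdsGT one_pos) (hlim hs))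

theorem exists_lt_convexCombination_div {L U c : ℝ} (hL : 0 < L) (hc : c < U / L) :
    ∃ ε : ℝ, 0 < ε ∧ ε < 1 ∧ c < ((1 - ε) * U + ε * L) / L := by
  obtain ⟨ε, ⟨hε0, hε1⟩, hlt⟩ :=
    exists_lineMap_mem_of_mem_nhds (Ioi_mem_nhds ((lt_div_iff₀ hL).mp hc)) L
  refine ⟨ε, hε0, hε1, (lt_div_iff₀ hL).mpr ?_⟩
  simpa [AffineMap.lineMap_apply_module] using hlt

/-- The naive prediction-following algorithm PP-n has worst-case competitive
ratio at least `U/L`, even with a correct point prediction of the critical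
value: on the two-item instance `(L, 1), (U, 1−ε)` the critical value is `L`,
PP-n earns exactly `L`, yet the feasible allocation `(ε, 1−ε)` earns
`(1−ε)U + εL ≤ OPT`, and `((1−ε)U + εL)/L` exceeds any `c < U/L` for suitable
`ε ∈ (0,1)`. -/
theorem stmt17 (L U ε : ℝ) (hL : 0 < L) (hLU : L < U) (hε0 : 0 < ε) (hε1 : ε < 1)
    (v w : Fin 2 → ℝ) (hv : v = ![L, U]) (hw : w = ![1, 1 - ε])
    (ppn OPT : ℝ)
    (hppn : ppn = v 0 * min (w 0) 1 + v 1 * min (w 1) (1 - min (w 0) 1))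
    (hOPT : IsGreatest {p : ℝ | ∃ y : Fin 2 → ℝ,
      (∀ i, 0 ≤ y i ∧ y i ≤ w i) ∧ y 0 + y 1 ≤ 1 ∧ p = v 0 * y 0 + v 1 * y 1} OPT) :
    (IsLeast {x : ℝ | (∃ i, v i = x) ∧
        ∑ i ∈ Finset.univ.filter (fun i => x < v i), w i < 1} L) ∧
    ppn = L ∧
    ((∀ i : Fin 2, 0 ≤ (![ε, 1 - ε] : Fin 2 → ℝ) i ∧
        (![ε, 1 - ε] : Fin 2 → ℝ) i ≤ w i) ∧
      ε + (1 - ε) ≤ 1 ∧ (1 - ε) * U + ε * L ≤ OPT) ∧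
    (∀ c : ℝ, c < U / L → ∃ ε' : ℝ, 0 < ε' ∧ ε' < 1 ∧
      c < ((1 - ε') * U + ε' * L) / L) := by
  subst hv hw
  have hcritical : IsCriticalValue_s17 ![L, U] ![1, 1 - ε] L :=
    isCriticalValue_of_forall_le (i := 0) (by simp [Fin.forall_fin_two, hLU.le])
      (by rw [sum_filter, Fin.sum_univ_two]; simp [hLU, hε0])
  have hprofit : ppn = L := calc
    ppn = ppnProfit L 1 [(L, 1), (U, 1 - ε)] :=
      hppn.trans (ppnProfit_pair 1 1 (1 - ε) le_rfl hLU.le).symm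
    _ = L * 1 := ppnProfit_cons_of_capacity_le le_rfl le_rfl (by simp [hε1.le])
    _ = L := mul_one L
  have hbounds : ∀ i : Fin 2, 0 ≤ ![ε, 1 - ε] i ∧ ![ε, 1 - ε] i ≤ ![1, 1 - ε] i := by
    simp [Fin.forall_fin_two, hε0.le, hε1.le]
  have hcapacity : ε + (1 - ε) ≤ 1 := (add_sub_cancel ε 1).le
  have hOPT_ge : (1 - ε) * U + ε * L ≤ OPT :=
    hOPT.2 ⟨![ε, 1 - ε], hbounds, hcapacity, show _ = L * ε + U * (1 - ε) by ring⟩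
  exact ⟨hcritical, hprofit, ⟨hbounds, hcapacity, hOPT_ge⟩,
    fun _ hc => exists_lt_convexCombination_div hL hc⟩
end

section
/- Let c ≥ 1 and let N be an integer with N > c; set κ = 1/N. Consider the items: a batch of N 'small' items, each of unit value 1 and weight κ, followed by 'big' items k = 1, …, N−1, where big item k has weight κ and total value c·(c+1)^{k−1}. For 1 ≤ i ≤ N let instance I_i consist of the small batch followed by big items 1,…,i−1; then OPT(I₁) = 1 and OPT(I_i) = (c+1)^{i−1} − (i−1)·κ for 2 ≤ i ≤ N (with knapsack capacity 1 and integral acceptance). Then there do not exist a ∈ {0, 1, …, N} (the number of small items accepted) and a set T ⊆ {1, …, N−1} (the big items accepted) such that all of the following hold: (feasibility) κ·a + κ·|T| ≤ 1; (c-competitiveness on I₁) 1 ≤ c·κ·a; and (c-competitiveness on I_i for each 2 ≤ i ≤ N) (c+1)^{i−1} − (i−1)·κ ≤ c·( κ·a + Σ_{k ∈ T, k ≤ i−1} c·(c+1)^{k−1} ). Hence, under the small-weight assumption alone (without bounded values), no deterministic algorithm for online integral knapsack is c-competitive on all these instances, even given a correct critical-value prediction. -/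
open Finset

/-!
The big values `c * (c + 1) ^ (k - 1)` are chosen so that the first `m` of them add up to
`(c + 1) ^ m - 1`. Competitiveness on `I₁` forces at least two small items to be accepted, which
leaves no room for all `N - 1` big items. Once big item `m + 1` is rejected, `I_{m + 2}` yields at
most `1 + ((c + 1) ^ m - 1)`, and `c` times this is `(c + 1) ^ (m + 1) - (c + 1) ^ m`, which misses
the optimum because the weight `(m + 1) * κ` displaced from the small batch is less than `1`.
-/

section Ring

variable {R : Type*} [Ring R]

theorem sum_Icc_one_mul_add_one_pow_pred (c : R) (m : ℕ) :
    ∑ k ∈ Icc 1 m, c * (c + 1) ^ (k - 1) = (c + 1) ^ m - 1 := by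
  calc ∑ k ∈ Icc 1 m, c * (c + 1) ^ (k - 1)
      = ∑ k ∈ range m, c * (c + 1) ^ k := by
        rw [range_eq_Ico, ← Ico_add_one_right_eq_Icc]
        exact (sum_Ico_add' (fun k => c * (c + 1) ^ (k - 1)) 0 m 1).symm
    _ = (c + 1) ^ m - 1 := by
        simpa only [add_sub_cancel_right, mul_sum] using mul_geom_sum (c + 1) m

variable [PartialOrder R] [IsOrderedRing R] {c : R} {T : Finset ℕ} {m : ℕ}

theorem sum_filter_mul_add_one_pow_pred_le_of_succ_notMem (hc : 0 ≤ c) (hT : ∀ k ∈ T, 1 ≤ k)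
    (hm : m + 1 ∉ T) :
    ∑ k ∈ T with k ≤ m + 1, c * (c + 1) ^ (k - 1) ≤ (c + 1) ^ m - 1 := by
  have hsub : {k ∈ T | k ≤ m + 1} ⊆ Icc 1 m := by
    intro k hk
    obtain ⟨hkT, hkm⟩ := mem_filter.mp hk
    have hne : k ≠ m + 1 := fun h => hm (h ▸ hkT)
    exact mem_Icc.mpr ⟨hT k hkT, by lia⟩
  rw [← sum_Icc_one_mul_add_one_pow_pred]
  exact sum_le_sum_of_subset_of_nonneg hsub fun _ _ _ =>
    mul_nonneg hc (pow_nonneg (add_nonneg hc zero_le_one) _)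

theorem mul_add_sum_filter_lt_of_succ_notMem (hc : 0 ≤ c) (hT : ∀ k ∈ T, 1 ≤ k) (hm : m + 1 ∉ T)
    {x y : R} (hx : x ≤ 1) (hy : y < 1) :
    c * (x + ∑ k ∈ T with k ≤ m + 1, c * (c + 1) ^ (k - 1)) < (c + 1) ^ (m + 1) - y := by
  calc c * (x + ∑ k ∈ T with k ≤ m + 1, c * (c + 1) ^ (k - 1))
      ≤ c * (1 + ((c + 1) ^ m - 1)) := by
        gcongr
        exact sum_filter_mul_add_one_pow_pred_le_of_succ_notMem hc hT hm
    _ = (c + 1) ^ (m + 1) - (c + 1) ^ m := by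
        rw [add_sub_cancel, pow_succ', add_mul, one_mul, add_sub_cancel_right]
    _ ≤ (c + 1) ^ (m + 1) - 1 := by
        gcongr
        exact one_le_pow₀ (le_add_of_nonneg_left hc)
    _ < (c + 1) ^ (m + 1) - y := sub_lt_sub_left hy _

end Ring

theorem exists_succ_notMem_of_add_card_le {R : Type*} [Semiring R] [LinearOrder R]
    [IsOrderedRing R] {c : R} {N a : ℕ} {T : Finset ℕ} (hc : 0 ≤ c) (hN : c < N)
    (hfeasible : a + #T ≤ N) (hcompetitive : N ≤ c * a) :
    ∃ m, m + 1 < N ∧ m + 1 ∉ T := by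
  have two_le : 2 ≤ a := by
    by_contra! ha
    have ha' : (a : R) ≤ 1 := by simpa using Nat.mono_cast (α := R) (Nat.le_of_lt_succ ha)
    exact (hcompetitive.trans (mul_le_of_le_one_right hc ha')).not_gt hN
  have card_lt : #T < #(Icc 1 (N - 1)) := by
    rw [Nat.card_Icc]
    lia
  obtain ⟨k, hk, hkT⟩ := exists_mem_notMem_of_card_lt_card card_lt
  obtain ⟨hk_pos, hk_le⟩ := mem_Icc.mp hk
  exact ⟨k - 1, by lia, by rwa [Nat.sub_add_cancel hk_pos]⟩

/-- Under the small-weight assumption alone (without bounded values), no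
deterministic algorithm for online integral knapsack is `c`-competitive on
all the prefix instances `I_1, …, I_N`, even given a correct critical-value
prediction: there is no choice of `a` accepted small items and a set `T` of
accepted big items that is feasible and `c`-competitive on every `I_i`. -/
theorem stmt19 (c : ℝ) (hc : 1 ≤ c) (N : ℕ) (hN : c < N) (κ : ℝ)
    (hκ : κ = 1 / (N : ℝ)) :
    ¬ ∃ (a : ℕ) (T : Finset ℕ), a ≤ N ∧ T ⊆ Finset.Icc 1 (N - 1) ∧
      κ * a + κ * T.card ≤ 1 ∧
      1 ≤ c * (κ * a) ∧
      (∀ i : ℕ, 2 ≤ i → i ≤ N →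
        (c + 1) ^ (i - 1) - (i - 1 : ℕ) * κ
          ≤ c * (κ * a +
              ∑ k ∈ T.filter (fun k => k ≤ i - 1), c * (c + 1) ^ (k - 1))) := by
  rintro ⟨a, T, haN, hT, hfeasible, hcompetitive, hprefix⟩
  have hc₀ : 0 ≤ c := zero_le_one.trans hc
  have hN₀ : (0 : ℝ) < N := hc₀.trans_lt hN
  have add_card_le : a + #T ≤ N := by
    rw [hκ, ← mul_add, one_div_mul_eq_div, div_le_one hN₀] at hfeasible
    exact_mod_cast hfeasible
  have le_mul : N ≤ c * a := by
    rwa [hκ, one_div_mul_eq_div, mul_div_assoc', one_le_div hN₀] at hcompetitive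
  have small_profit_le : κ * a ≤ 1 := by
    rw [hκ, one_div_mul_eq_div, div_le_one hN₀]
    exact_mod_cast haN
  obtain ⟨m, hmN, hmT⟩ := exists_succ_notMem_of_add_card_le hc₀ hN add_card_le le_mul
  have displaced_lt : (m + 1 : ℕ) * κ < 1 := by
    rw [hκ, mul_one_div, div_lt_one hN₀]
    exact_mod_cast hmN
  exact (hprefix (m + 2) (by lia) hmN).not_gt <|
    mul_add_sum_filter_lt_of_succ_notMem hc₀ (fun k hk => (mem_Icc.mp (hT hk)).1) hmT
      small_profit_le displaced_lt
end
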